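/- arXiv:1907.05999 — 3 statements merged into one kernel-verified Lean document; each statement's English description precedes it below -/
import Mathlib

section
/- Let D be a lattice in ℳ(𝔽). Then at least one of the following holds: (i) τD = D (and then pD^∨ ⊂² D ⊂² D^∨); (ii) there is a τ-stable lattice L with L = L^∨ and pL^∨ ⊂¹ pD^∨ ⊂² D ⊂¹ L; (iii) there is a τ-stable lattice L with L = pL^∨ and pD^∨ ⊂¹ pL^∨, L ⊂¹ D ⊂² D^∨ ⊂¹ L^∨. -/
open Pointwise

noncomputable section

variable (p : ℕ) [Fact p.Prime] (𝔽 : Type) [Field 𝔽] [IsAlgClosed 𝔽] [CharP 𝔽 p]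

/-- The Witt ring `W(𝔽)`. -/
abbrev Wp := WittVector p 𝔽

/-- The fraction field `K` of `W(𝔽)`. -/
abbrev Kp := FractionRing (Wp p 𝔽)

/-- `N₀ = K⁴`. -/
abbrev N0 := Fin 4 → Kp p 𝔽

/-- The symplectic form on `N₀`. -/
def omegaForm (x y : N0 p 𝔽) : Kp p 𝔽 :=
  x 0 * y 3 - x 3 * y 0 + x 1 * y 2 - x 2 * y 1

/-- The dual lattice of a `W`-submodule of `N₀`. -/
def dualL (D : Submodule (Wp p 𝔽) (N0 p 𝔽)) : Submodule (Wp p 𝔽) (N0 p 𝔽) where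
  carrier := {x | ∀ d ∈ D, omegaForm p 𝔽 x d ∈ (algebraMap (Wp p 𝔽) (Kp p 𝔽)).range}
  zero_mem' := by
    intro d hd
    have : omegaForm p 𝔽 0 d = 0 := by simp [omegaForm]
    rw [this]; exact zero_mem _
  add_mem' := by
    intro x y hx hy d hd
    have : omegaForm p 𝔽 (x + y) d = omegaForm p 𝔽 x d + omegaForm p 𝔽 y d := by
      simp [omegaForm]; ring
    rw [this]; exact add_mem (hx d hd) (hy d hd)
  smul_mem' := by
    intro c x hx d hd
    have : omegaForm p 𝔽 (c • x) d
        = algebraMap (Wp p 𝔽) (Kp p 𝔽) c * omegaForm p 𝔽 x d := by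
      simp [omegaForm, Algebra.smul_def]; ring
    rw [this]; exact mul_mem ⟨c, rfl⟩ (hx d hd)

variable (σ : Kp p 𝔽 ≃+* Kp p 𝔽)

/-- The semilinear map `τ` on `N₀`, applying `σ` to each coordinate. -/
def tauFun (x : N0 p 𝔽) : N0 p 𝔽 := fun i => σ (x i)

/-- The lattice `τD` generated by the image of `D` under `τ`. -/
def tauL (D : Submodule (Wp p 𝔽) (N0 p 𝔽)) : Submodule (Wp p 𝔽) (N0 p 𝔽) :=
  Submodule.span (Wp p 𝔽) (tauFun p 𝔽 σ '' D)

/-- `D` is a lattice in `N₀`: finitely generated over `W` and spanning `N₀` over `K`. -/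
def IsLattice (D : Submodule (Wp p 𝔽) (N0 p 𝔽)) : Prop :=
  D.FG ∧ Submodule.span (Kp p 𝔽) (D : Set (N0 p 𝔽)) = ⊤

/-- The length of the `W`-module `B / A` (as the Krull dimension of its submodule
lattice). -/
def relLength (A B : Submodule (Wp p 𝔽) (N0 p 𝔽)) : WithBot ℕ∞ :=
  Order.krullDim (Submodule (Wp p 𝔽) (B ⧸ (A.comap B.subtype)))

/-- `A ⊂ᵈ B` : `A ⊆ B` with colength `d`. -/
def SubD (d : ℕ) (A B : Submodule (Wp p 𝔽) (N0 p 𝔽)) : Prop :=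
  A ≤ B ∧ relLength p 𝔽 A B = (d : WithBot ℕ∞)

/-- Membership in `ℳ(𝔽)`. -/
def memM (D : Submodule (Wp p 𝔽) (N0 p 𝔽)) : Prop :=
  IsLattice p 𝔽 D ∧
  SubD p 𝔽 2 ((p : Wp p 𝔽) • dualL p 𝔽 D) D ∧
  SubD p 𝔽 2 D (dualL p 𝔽 D) ∧
  SubD p 𝔽 2 ((p : Wp p 𝔽) • dualL p 𝔽 D) (tauL p 𝔽 σ D) ∧
  SubD p 𝔽 2 (tauL p 𝔽 σ D) (dualL p 𝔽 D) ∧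
  relLength p 𝔽 D (D ⊔ tauL p 𝔽 σ D) ≤ 1

/-- `σ` is the automorphism of `K` induced by the Witt-vector Frobenius. -/
def IsWittFrobenius : Prop :=
  ∀ w : Wp p 𝔽, σ (algebraMap (Wp p 𝔽) (Kp p 𝔽) w)
    = algebraMap (Wp p 𝔽) (Kp p 𝔽) (WittVector.frobeniusEquiv p 𝔽 w)


section Len
variable {R M : Type*} [Ring R] [AddCommGroup M] [Module R M]

/-- length of `B / A`. -/
def lenQ (A B : Submodule R M) : ℕ∞ := Module.length R (B ⧸ (A.comap B.subtype))

theorem lenQ_add {A B C : Submodule R M} (h1 : A ≤ B) (h2 : B ≤ C) :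
    lenQ A C = lenQ A B + lenQ B C := by
  unfold lenQ
  have hle : A.comap B.subtype ≤ (A.comap C.subtype).comap (Submodule.inclusion h2) := by
    intro x hx; exact hx
  have hle2 : A.comap C.subtype ≤ (B.comap C.subtype).comap LinearMap.id := by
    intro x hx; exact h1 hx
  refine Module.length_eq_add_of_exact
    (Submodule.mapQ _ _ (Submodule.inclusion h2) hle)
    (Submodule.mapQ _ _ LinearMap.id hle2) ?_ ?_ ?_
  · rw [← LinearMap.ker_eq_bot, LinearMap.ker_eq_bot']
    intro m hm
    induction m using Submodule.Quotient.induction_on with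
    | _ m =>
    rw [Submodule.mapQ_apply, Submodule.Quotient.mk_eq_zero] at hm
    rw [Submodule.Quotient.mk_eq_zero]
    exact hm
  · intro y
    induction y using Submodule.Quotient.induction_on with
    | _ y => exact ⟨Submodule.Quotient.mk y, rfl⟩
  · intro y
    induction y using Submodule.Quotient.induction_on with
    | _ y =>
    rw [Submodule.mapQ_apply, Submodule.Quotient.mk_eq_zero]
    constructor
    · intro h
      exact ⟨Submodule.Quotient.mk ⟨y.1, h⟩, rfl⟩
    · rintro ⟨x, hx⟩
      induction x using Submodule.Quotient.induction_on with
      | _ x =>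
      rw [Submodule.mapQ_apply, Submodule.Quotient.eq] at hx
      have h3 : (x : M) - (y : M) ∈ A := hx
      have h4 := B.sub_mem x.2 (h1 h3)
      simpa using h4

theorem lenQ_eq_zero {A B : Submodule R M} : lenQ A B = 0 ↔ B ≤ A := by
  unfold lenQ
  rw [Module.length_eq_zero_iff, Submodule.Quotient.subsingleton_iff, Submodule.comap_subtype_eq_top]

theorem lenQ_eq_one {A B : Submodule R M} (h : A ≤ B) : lenQ A B = 1 ↔ A ⋖ B := by
  unfold lenQ
  rw [Module.length_eq_one_iff, covBy_iff_quot_is_simple h]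

theorem lenQ_one_of {A B : Submodule R M} (h : A < B) (h1 : lenQ A B ≤ 1) : A ⋖ B := by
  rw [← lenQ_eq_one h.le]
  exact le_antisymm h1 (Order.one_le_iff_ne_zero.2 fun h0 => h.not_ge (lenQ_eq_zero.1 h0))

theorem two_split {A C B : Submodule R M} (h : lenQ A B = 2) (h1 : A < C) (h2 : C < B) :
    A ⋖ C ∧ C ⋖ B := by
  rw [← lenQ_eq_one h1.le, ← lenQ_eq_one h2.le]
  rw [lenQ_add h1.le h2.le] at h
  have ha : lenQ A C ≠ 0 := fun h0 => h1.not_ge (lenQ_eq_zero.1 h0)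
  have hb : lenQ C B ≠ 0 := fun h0 => h2.not_ge (lenQ_eq_zero.1 h0)
  generalize lenQ A C = a at *
  generalize lenQ C B = b at *
  induction a with
  | top => simp at h
  | coe a =>
  induction b with
  | top => simp at h
  | coe b =>
  norm_cast at *
  omega

theorem two_lt {A C B : Submodule R M} (h : lenQ A B = 2) (h1 : A ⋖ C) (h2 : C ≤ B) : C < B := by
  refine lt_of_le_of_ne h2 ?_
  rintro rfl
  rw [(lenQ_eq_one h1.le).2 h1] at h
  exact absurd h (by decide)

theorem two_lt' {A C B : Submodule R M} (h : lenQ A B = 2) (h1 : A ≤ C) (h2 : C ⋖ B) : A < C := by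
  refine lt_of_le_of_ne h1 ?_
  rintro rfl
  rw [(lenQ_eq_one h2.le).2 h2] at h
  exact absurd h (by decide)

theorem two_eq {A C B : Submodule R M} (h : lenQ A B = 2) (h' : lenQ C B = 2) (h1 : A ≤ C)
    (h2 : C ≤ B) : A = C := by
  rw [lenQ_add h1 h2, h'] at h
  refine le_antisymm h1 (lenQ_eq_zero.1 ?_)
  generalize lenQ A C = a at *
  induction a with
  | top => simp at h
  | coe a =>
  norm_cast at *
  omega
end Len

section Helpers
set_option linter.unusedSectionVars false

theorem relLength_eq (A B : Submodule (Wp p 𝔽) (N0 p 𝔽)) :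
    relLength p 𝔽 A B = (lenQ A B : WithBot ℕ∞) := by
  unfold relLength lenQ
  rw [Module.coe_length]

theorem SubD_iff (d : ℕ) (A B : Submodule (Wp p 𝔽) (N0 p 𝔽)) :
    SubD p 𝔽 d A B ↔ A ≤ B ∧ lenQ A B = d := by
  unfold SubD
  rw [relLength_eq]
  norm_cast

theorem SubD_one (A B : Submodule (Wp p 𝔽) (N0 p 𝔽)) :
    SubD p 𝔽 1 A B ↔ A ⋖ B := by
  rw [SubD_iff]
  constructor
  · rintro ⟨h, h1⟩
    exact (lenQ_eq_one h).1 (by simpa using h1)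
  · intro h
    exact ⟨h.le, by simpa using (lenQ_eq_one h.le).2 h⟩

/-- the form as a bilinear form -/
def omB : LinearMap.BilinForm (Kp p 𝔽) (N0 p 𝔽) :=
  LinearMap.mk₂ (Kp p 𝔽) (omegaForm p 𝔽)
    (by intros; simp [omegaForm]; ring) (by intros; simp [omegaForm]; ring)
    (by intros; simp [omegaForm]; ring) (by intros; simp [omegaForm]; ring)

theorem omega_swap (x y : N0 p 𝔽) : omegaForm p 𝔽 x y = - omegaForm p 𝔽 y x := by
  simp [omegaForm]; ring

theorem omB_nondeg : (omB p 𝔽).Nondegenerate := by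
  have key : ∀ x : N0 p 𝔽, (∀ y, omegaForm p 𝔽 x y = 0) → x = 0 := by
    intro x h
    have h0 := h (Pi.single 3 1)
    have h1 := h (Pi.single 2 1)
    have h2 := h (Pi.single 1 1)
    have h3 := h (Pi.single 0 1)
    simp [omegaForm] at h0 h1 h2 h3
    ext i
    fin_cases i <;> simp_all
  constructor
  · intro x h
    exact key x h
  · intro x h
    refine key x fun y => ?_
    rw [omega_swap, neg_eq_zero]
    exact h y

theorem dualL_eq (D : Submodule (Wp p 𝔽) (N0 p 𝔽)) :
    dualL p 𝔽 D = (omB p 𝔽).dualSubmodule D := by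
  ext x
  simp only [LinearMap.BilinForm.mem_dualSubmodule, Submodule.mem_one]
  rfl

theorem dualL_eq' (D : Submodule (Wp p 𝔽) (N0 p 𝔽)) :
    dualL p 𝔽 D = (omB p 𝔽).flip.dualSubmodule D := by
  ext x
  simp only [LinearMap.BilinForm.mem_dualSubmodule, Submodule.mem_one]
  constructor
  · intro h y hy
    obtain ⟨w, hw⟩ := h y hy
    refine ⟨-w, ?_⟩
    rw [map_neg, hw]
    exact (omega_swap p 𝔽 y x).symm
  · intro h y hy
    obtain ⟨w, hw⟩ := h y hy
    refine ⟨-w, ?_⟩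
    rw [map_neg, hw]
    exact (omega_swap p 𝔽 x y).symm

theorem dual_dual (D : Submodule (Wp p 𝔽) (N0 p 𝔽)) (hD : IsLattice p 𝔽 D) :
    dualL p 𝔽 (dualL p 𝔽 D) = D := by
  have : Submodule.IsLattice (Kp p 𝔽) D := ⟨hD.1, hD.2⟩
  have : Module.Free (Wp p 𝔽) D := Submodule.IsLattice.free (Kp p 𝔽) D
  have : Module.Finite (Wp p 𝔽) D := Submodule.IsLattice.finite (Kp p 𝔽) D
  let b := Module.Free.chooseBasis (Wp p 𝔽) D
  have hb : Submodule.span (Wp p 𝔽) (Set.range (b.extendOfIsLattice (Kp p 𝔽))) = D := by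
    have h1 : (b.extendOfIsLattice (Kp p 𝔽) : _ → N0 p 𝔽) = D.subtype ∘ b := by
      funext i
      simp
    rw [h1, Set.range_comp, Submodule.span_image, b.span_eq]
    simp
  have := LinearMap.BilinForm.dualSubmodule_dualSubmodule_flip_of_basis (R := Wp p 𝔽) (omB p 𝔽)
    (omB_nondeg p 𝔽) (b.extendOfIsLattice (Kp p 𝔽))
  rw [hb] at this
  rw [dualL_eq' p 𝔽 D, dualL_eq p 𝔽]
  exact this

/-- `σ` restricts to an automorphism of `W`. -/
def FrobLike (σ : Kp p 𝔽 ≃+* Kp p 𝔽) : Prop :=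
  ∃ φ : Wp p 𝔽 ≃+* Wp p 𝔽, ∀ w, σ (algebraMap (Wp p 𝔽) (Kp p 𝔽) w)
    = algebraMap (Wp p 𝔽) (Kp p 𝔽) (φ w)

variable {p 𝔽 σ}

theorem FrobLike.symm (h : FrobLike p 𝔽 σ) : FrobLike p 𝔽 σ.symm := by
  obtain ⟨φ, h⟩ := h
  refine ⟨φ.symm, fun w => ?_⟩
  rw [RingEquiv.symm_apply_eq, h]
  simp

theorem FrobLike.range (h : FrobLike p 𝔽 σ) (x : Kp p 𝔽)
    (hx : x ∈ (algebraMap (Wp p 𝔽) (Kp p 𝔽)).range) :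
    σ x ∈ (algebraMap (Wp p 𝔽) (Kp p 𝔽)).range := by
  obtain ⟨φ, h⟩ := h
  obtain ⟨w, rfl⟩ := hx
  exact ⟨φ w, (h w).symm⟩

theorem tauFun_symm_tauFun (x : N0 p 𝔽) : tauFun p 𝔽 σ.symm (tauFun p 𝔽 σ x) = x := by
  funext i; simp [tauFun]

theorem tauFun_tauFun_symm (x : N0 p 𝔽) : tauFun p 𝔽 σ (tauFun p 𝔽 σ.symm x) = x := by
  funext i; simp [tauFun]

theorem tauFun_add (x y : N0 p 𝔽) :
    tauFun p 𝔽 σ (x + y) = tauFun p 𝔽 σ x + tauFun p 𝔽 σ y := by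
  funext i; simp [tauFun]

theorem omega_tau (x y : N0 p 𝔽) :
    omegaForm p 𝔽 (tauFun p 𝔽 σ x) (tauFun p 𝔽 σ y) = σ (omegaForm p 𝔽 x y) := by
  simp [omegaForm, tauFun]

theorem FrobLike.mem_tauL (h : FrobLike p 𝔽 σ) {D : Submodule (Wp p 𝔽) (N0 p 𝔽)} {x : N0 p 𝔽} :
    x ∈ tauL p 𝔽 σ D ↔ tauFun p 𝔽 σ.symm x ∈ D := by
  constructor
  · intro hx
    obtain ⟨φ, hφ⟩ := h.symm
    unfold tauL at hx
    induction hx using Submodule.span_induction with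
    | mem x hx =>
      obtain ⟨y, hy, rfl⟩ := hx
      rw [tauFun_symm_tauFun]; exact hy
    | zero =>
      have : tauFun p 𝔽 σ.symm 0 = 0 := by funext i; simp [tauFun]
      rw [this]; exact zero_mem _
    | add x y _ _ hx hy => rw [tauFun_add]; exact add_mem hx hy
    | smul c x _ hx =>
      have : tauFun p 𝔽 σ.symm (c • x) = φ c • tauFun p 𝔽 σ.symm x := by
        funext i
        simp only [tauFun, Pi.smul_apply, Algebra.smul_def, map_mul, hφ]
      rw [this]; exact D.smul_mem _ hx
  · intro hx
    exact Submodule.subset_span ⟨_, hx, tauFun_tauFun_symm x⟩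

theorem FrobLike.tauL_le (h : FrobLike p 𝔽 σ) {D E : Submodule (Wp p 𝔽) (N0 p 𝔽)} :
    tauL p 𝔽 σ D ≤ tauL p 𝔽 σ E ↔ D ≤ E := by
  constructor
  · intro hh x hx
    have h1 := (h.mem_tauL).1 (hh ((h.mem_tauL (x := tauFun p 𝔽 σ x)).2
      (by rw [tauFun_symm_tauFun]; exact hx)))
    rwa [tauFun_symm_tauFun] at h1
  · intro hh x hx
    rw [h.mem_tauL] at hx ⊢
    exact hh hx

theorem FrobLike.tauL_tauL (h : FrobLike p 𝔽 σ) (D : Submodule (Wp p 𝔽) (N0 p 𝔽)) :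
    tauL p 𝔽 σ (tauL p 𝔽 σ.symm D) = D := by
  ext x
  rw [h.mem_tauL, h.symm.mem_tauL]
  change tauFun p 𝔽 σ _ ∈ D ↔ _
  rw [tauFun_tauFun_symm]

/-- `τ` as an order isomorphism. -/
def FrobLike.iso (h : FrobLike p 𝔽 σ) :
    Submodule (Wp p 𝔽) (N0 p 𝔽) ≃o Submodule (Wp p 𝔽) (N0 p 𝔽) where
  toFun := tauL p 𝔽 σ
  invFun := tauL p 𝔽 σ.symm
  left_inv D := h.symm.tauL_tauL D
  right_inv D := h.tauL_tauL D
  map_rel_iff' := h.tauL_le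

theorem FrobLike.covBy (h : FrobLike p 𝔽 σ) {D E : Submodule (Wp p 𝔽) (N0 p 𝔽)} (hh : D ⋖ E) :
    tauL p 𝔽 σ D ⋖ tauL p 𝔽 σ E :=
  (apply_covBy_apply_iff h.iso).2 hh

theorem FrobLike.dual (h : FrobLike p 𝔽 σ) (D : Submodule (Wp p 𝔽) (N0 p 𝔽)) :
    dualL p 𝔽 (tauL p 𝔽 σ D) = tauL p 𝔽 σ (dualL p 𝔽 D) := by
  ext x
  rw [h.mem_tauL]
  constructor
  · intro hx d hd
    have h1 := hx (tauFun p 𝔽 σ d) ((h.mem_tauL).2 (by rw [tauFun_symm_tauFun]; exact hd))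
    have h2 := h.symm.range _ h1
    rwa [← omega_tau, tauFun_symm_tauFun] at h2
  · intro hx d hd
    have h1 := hx _ (h.mem_tauL.1 hd)
    have h2 := h.range _ h1
    rwa [← omega_tau, tauFun_tauFun_symm, tauFun_tauFun_symm] at h2

theorem dual_anti {D E : Submodule (Wp p 𝔽) (N0 p 𝔽)} (h : D ≤ E) :
    dualL p 𝔽 E ≤ dualL p 𝔽 D := fun _ hx d hd => hx d (h hd)

theorem le_dual_comm {D E : Submodule (Wp p 𝔽) (N0 p 𝔽)} (h : D ≤ dualL p 𝔽 E) :
    E ≤ dualL p 𝔽 D := by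
  intro x hx d hd
  rw [omega_swap]
  exact neg_mem (h hd x hx)

theorem pW_ne : (p : Wp p 𝔽) ≠ 0 := (WittVector.irreducible p).ne_zero

theorem pK_ne : algebraMap (Wp p 𝔽) (Kp p 𝔽) (p : Wp p 𝔽) ≠ 0 := by
  rw [Ne, IsFractionRing.to_map_eq_zero_iff]
  exact pW_ne

theorem psmul_inj : Function.Injective (fun x : N0 p 𝔽 => (p : Wp p 𝔽) • x) := by
  intro x y h
  funext i
  have := congrFun h i
  simp only [Pi.smul_apply, Algebra.smul_def] at this
  exact mul_left_cancel₀ pK_ne this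

theorem psmul_mem {D : Submodule (Wp p 𝔽) (N0 p 𝔽)} {x : N0 p 𝔽} :
    (p : Wp p 𝔽) • x ∈ (p : Wp p 𝔽) • D ↔ x ∈ D := by
  rw [Submodule.mem_smul_pointwise_iff_exists]
  constructor
  · rintro ⟨y, hy, h⟩
    rwa [← psmul_inj h]
  · intro h; exact ⟨x, h, rfl⟩

theorem psmul_le {D E : Submodule (Wp p 𝔽) (N0 p 𝔽)} :
    (p : Wp p 𝔽) • D ≤ (p : Wp p 𝔽) • E ↔ D ≤ E := by
  constructor
  · intro h x hx
    exact psmul_mem.1 (h (psmul_mem.2 hx))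
  · intro h x hx
    obtain ⟨y, hy, rfl⟩ := (Submodule.mem_smul_pointwise_iff_exists _ _ _).1 hx
    exact psmul_mem.2 (h hy)

theorem psmul_le_self {D : Submodule (Wp p 𝔽) (N0 p 𝔽)} : (p : Wp p 𝔽) • D ≤ D := by
  intro x hx
  obtain ⟨y, hy, rfl⟩ := (Submodule.mem_smul_pointwise_iff_exists _ _ _).1 hx
  exact D.smul_mem _ hy

/-- multiplication by `p` as an order embedding -/
def pEmb : Submodule (Wp p 𝔽) (N0 p 𝔽) ↪o Submodule (Wp p 𝔽) (N0 p 𝔽) :=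
  OrderEmbedding.ofMapLEIff (fun D => (p : Wp p 𝔽) • D) (fun _ _ => psmul_le)

theorem psmul_comap {D C : Submodule (Wp p 𝔽) (N0 p 𝔽)} (h : C ≤ (p : Wp p 𝔽) • D) :
    ∃ E : Submodule (Wp p 𝔽) (N0 p 𝔽), (p : Wp p 𝔽) • E = C := by
  refine ⟨C.comap (LinearMap.lsmul (Wp p 𝔽) (N0 p 𝔽) (p : Wp p 𝔽)), ?_⟩
  ext x
  rw [Submodule.mem_smul_pointwise_iff_exists]
  constructor
  · rintro ⟨y, hy, rfl⟩
    exact hy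
  · intro hx
    obtain ⟨y, hy, rfl⟩ := (Submodule.mem_smul_pointwise_iff_exists _ _ _).1 (h hx)
    exact ⟨y, hx, rfl⟩

theorem psmul_covBy {D E : Submodule (Wp p 𝔽) (N0 p 𝔽)} :
    (p : Wp p 𝔽) • D ⋖ (p : Wp p 𝔽) • E ↔ D ⋖ E := by
  constructor
  · exact CovBy.of_image pEmb
  · intro h
    refine ⟨pEmb.lt_iff_lt.2 h.lt, fun C h1 h2 => ?_⟩
    obtain ⟨F, rfl⟩ := psmul_comap h2.le
    exact h.2 (pEmb.lt_iff_lt.1 h1) (pEmb.lt_iff_lt.1 h2)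

theorem psmul_cancel {D E : Submodule (Wp p 𝔽) (N0 p 𝔽)}
    (h : (p : Wp p 𝔽) • D = (p : Wp p 𝔽) • E) : D = E := pEmb.injective h

/-- the lattice `c W⁴` -/
def Lam (c : Kp p 𝔽) : Submodule (Wp p 𝔽) (N0 p 𝔽) where
  carrier := {x | ∀ i, ∃ w : Wp p 𝔽, x i = c * algebraMap _ _ w}
  zero_mem' := fun i => ⟨0, by simp⟩
  add_mem' := by
    intro x y hx hy i
    obtain ⟨a, ha⟩ := hx i
    obtain ⟨b, hb⟩ := hy i
    exact ⟨a + b, by rw [Pi.add_apply, ha, hb, map_add, mul_add]⟩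
  smul_mem' := by
    intro r x hx i
    obtain ⟨a, ha⟩ := hx i
    exact ⟨r * a, by rw [Pi.smul_apply, ha, map_mul, Algebra.smul_def]; ring⟩

theorem FrobLike.Lam_le (h : FrobLike p 𝔽 σ) {c : Kp p 𝔽} (hc : σ c = c)
    {D : Submodule (Wp p 𝔽) (N0 p 𝔽)} :
    tauL p 𝔽 σ D ≤ Lam c ↔ D ≤ Lam c := by
  have : tauL p 𝔽 σ (Lam c) = Lam c := by
    ext x
    rw [h.mem_tauL]
    obtain ⟨φ, hφ⟩ := h
    refine forall_congr' fun i => ?_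
    constructor
    · rintro ⟨w, hw⟩
      refine ⟨φ w, ?_⟩
      rw [← hφ, ← hc, ← map_mul, ← hw]
      simp [tauFun]
    · rintro ⟨w, hw⟩
      refine ⟨φ.symm w, ?_⟩
      unfold tauFun
      rw [RingEquiv.symm_apply_eq, map_mul, hφ, hc, hw]
      simp
  rw [← this, h.tauL_le, this]

theorem psmul_Lam (c : Kp p 𝔽) : (p : Wp p 𝔽) • Lam c ≤ Lam ((p : Kp p 𝔽) * c) := by
  intro x hx
  obtain ⟨y, hy, rfl⟩ := (Submodule.mem_smul_pointwise_iff_exists _ _ _).1 hx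
  intro i
  obtain ⟨w, hw⟩ := hy i
  refine ⟨w, ?_⟩
  rw [Pi.smul_apply, hw, Algebra.smul_def, map_natCast, mul_assoc]

theorem exists_den (x : Kp p 𝔽) : ∃ (k : ℕ) (w : Wp p 𝔽), (p : Kp p 𝔽) ^ k * x = algebraMap _ _ w := by
  obtain ⟨a, b, hb, rfl⟩ := IsFractionRing.div_surjective (A := Wp p 𝔽) x
  have hb0 : b ≠ 0 := nonZeroDivisors.ne_zero hb
  obtain ⟨k, u, hu⟩ := WittVector.exists_eq_pow_p_mul' b hb0
  refine ⟨k, ((u⁻¹ : (Wp p 𝔽)ˣ) : Wp p 𝔽) * a, ?_⟩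
  have hb1 : algebraMap (Wp p 𝔽) (Kp p 𝔽) b ≠ 0 := by
    rwa [Ne, IsFractionRing.to_map_eq_zero_iff]
  have h2 : (p : Wp p 𝔽) ^ k * a = b * (((u⁻¹ : (Wp p 𝔽)ˣ) : Wp p 𝔽) * a) := by
    rw [hu]
    have := u.mul_inv
    linear_combination (-(p : Wp p 𝔽) ^ k * a) * this
  have h3 := congrArg (algebraMap (Wp p 𝔽) (Kp p 𝔽)) h2
  rw [map_mul, map_pow, map_natCast, map_mul _ b] at h3
  rw [← mul_div_assoc, h3]
  field_simp

theorem pK_ne' : (p : Kp p 𝔽) ≠ 0 := by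
  have := pK_ne (p := p) (𝔽 := 𝔽)
  rwa [map_natCast] at this

theorem Lam_mono {k l : ℕ} (h : k ≤ l) :
    Lam (((p : Kp p 𝔽) ^ k)⁻¹) ≤ Lam (((p : Kp p 𝔽) ^ l)⁻¹) := by
  intro x hx i
  obtain ⟨w, hw⟩ := hx i
  obtain ⟨m, rfl⟩ := Nat.exists_eq_add_of_le h
  refine ⟨(p : Wp p 𝔽) ^ m * w, ?_⟩
  have := pK_ne' (p := p) (𝔽 := 𝔽)
  rw [hw, map_mul, map_pow, map_natCast, pow_add]
  field_simp

theorem exists_Lam_vec (x : N0 p 𝔽) : ∃ k : ℕ, x ∈ Lam (((p : Kp p 𝔽) ^ k)⁻¹) := by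
  choose k w h using fun i => exists_den (x i)
  refine ⟨∑ i, k i, fun i => ?_⟩
  have hi : x ∈ Lam (((p : Kp p 𝔽) ^ (∑ i, k i))⁻¹) ↔ True := by
    have hp := pK_ne' (p := p) (𝔽 := 𝔽)
    simp only [iff_true]
    intro j
    have hj : k j ≤ ∑ i, k i := Finset.single_le_sum (fun _ _ => Nat.zero_le _) (Finset.mem_univ j)
    obtain ⟨m, hm⟩ := Nat.exists_eq_add_of_le hj
    refine ⟨(p : Wp p 𝔽) ^ m * w j, ?_⟩
    rw [map_mul, map_pow, map_natCast, ← h j, hm, pow_add]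
    field_simp
  exact (hi.2 trivial) i

theorem exists_Lam (D : Submodule (Wp p 𝔽) (N0 p 𝔽)) (hD : D.FG) :
    ∃ k : ℕ, D ≤ Lam (((p : Kp p 𝔽) ^ k)⁻¹) := by
  induction D, hD using Submodule.fg_induction with
  | singleton x =>
    obtain ⟨k, hk⟩ := exists_Lam_vec x
    exact ⟨k, by rwa [Submodule.span_singleton_le_iff_mem]⟩
  | sup A B _ _ hA hB =>
    obtain ⟨k, hk⟩ := hA
    obtain ⟨l, hl⟩ := hB
    exact ⟨max k l, sup_le (hk.trans (Lam_mono (le_max_left _ _)))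
      (hl.trans (Lam_mono (le_max_right _ _)))⟩

theorem no_descent (D : Submodule (Wp p 𝔽) (N0 p 𝔽)) (hD : IsLattice p 𝔽 D)
    (σ : Kp p 𝔽 ≃+* Kp p 𝔽)
    (h : ∀ c : Kp p 𝔽, σ c = c → D ≤ Lam c → D ≤ Lam ((p : Kp p 𝔽) * c)) : False := by
  obtain ⟨k, hk⟩ := exists_Lam D hD.1
  have hp := pK_ne' (p := p) (𝔽 := 𝔽)
  have key : ∀ n : ℕ, D ≤ Lam ((p : Kp p 𝔽) ^ n * ((p : Kp p 𝔽) ^ k)⁻¹) := by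
    intro n
    induction n with
    | zero => simpa using hk
    | succ n ih =>
      have := h _ (by simp) ih
      rwa [← mul_assoc, ← pow_succ'] at this
  have hbot : D = ⊥ := by
    rw [eq_bot_iff]
    intro x hx
    rw [Submodule.mem_bot]
    funext i
    obtain ⟨w, hw⟩ := hk hx i
    by_contra hne
    have hw0 : w ≠ 0 := by
      rintro rfl
      apply hne
      rw [hw]; simp
    obtain ⟨n, hn⟩ := FiniteMultiplicity.of_not_isUnit (WittVector.irreducible p).not_isUnit hw0
    apply hn
    obtain ⟨v, hv⟩ := key (n + 1) hx i
    refine ⟨v, ?_⟩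
    apply IsFractionRing.injective (Wp p 𝔽) (Kp p 𝔽)
    rw [hw] at hv
    rw [map_mul, map_pow, map_natCast]
    field_simp at hv
    exact hv
  have h2 := hD.2
  rw [hbot] at h2
  simp at h2

theorem main_aux (h : FrobLike p 𝔽 σ) (D : Submodule (Wp p 𝔽) (N0 p 𝔽)) (hD : memM p 𝔽 σ D)
    (hne : tauL p 𝔽 σ D ≠ D) :
    (∃ L : Submodule (Wp p 𝔽) (N0 p 𝔽), IsLattice p 𝔽 L ∧ tauL p 𝔽 σ L = L ∧
      L = dualL p 𝔽 L ∧
      (p : Wp p 𝔽) • dualL p 𝔽 L ⋖ (p : Wp p 𝔽) • dualL p 𝔽 D ∧ D ⋖ L) ∨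
    (∃ L : Submodule (Wp p 𝔽) (N0 p 𝔽), IsLattice p 𝔽 L ∧ tauL p 𝔽 σ L = L ∧
      L = (p : Wp p 𝔽) • dualL p 𝔽 L ∧
      (p : Wp p 𝔽) • dualL p 𝔽 D ⋖ (p : Wp p 𝔽) • dualL p 𝔽 L ∧
      L ⋖ D ∧ dualL p 𝔽 D ⋖ dualL p 𝔽 L) := by
  obtain ⟨hlat, h1, h2, h3, h4, h5⟩ := hD
  rw [SubD_iff] at h1 h2 h3 h4
  rw [relLength_eq] at h5
  obtain ⟨i1, l1⟩ := h1
  obtain ⟨i2, l2⟩ := h2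
  obtain ⟨i3, l3⟩ := h3
  obtain ⟨i4, l4⟩ := h4
  have l5 : lenQ D (D ⊔ tauL p 𝔽 σ D) ≤ 1 := by exact_mod_cast h5
  have dd := dual_dual p 𝔽 D hlat
  have hdual := h.dual D
  -- `τD ≰ D`, `D ≰ τD`
  have n1 : ¬ tauL p 𝔽 σ D ≤ D := fun hh => hne (two_eq l4 l2 hh i2)
  have n2 : ¬ D ≤ tauL p 𝔽 σ D := fun hh => hne (two_eq l2 l4 hh i4).symm
  have i5 : D ≤ tauL p 𝔽 σ (dualL p 𝔽 D) := by rw [← hdual]; exact le_dual_comm i4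
  have i6 : tauL p 𝔽 σ D ≤ tauL p 𝔽 σ (dualL p 𝔽 D) := h.tauL_le.2 i2
  have i7 : (p : Wp p 𝔽) • tauL p 𝔽 σ (dualL p 𝔽 D) ≤ D := by
    intro x hx
    obtain ⟨y, hy, rfl⟩ := (Submodule.mem_smul_pointwise_iff_exists _ _ _).1 hx
    rw [← hdual] at hy
    rw [← dd]
    intro d hd
    have := hy ((p : Wp p 𝔽) • d) (i3 (psmul_mem.2 hd))
    have e : omegaForm p 𝔽 ((p : Wp p 𝔽) • y) d = omegaForm p 𝔽 y ((p : Wp p 𝔽) • d) := by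
      simp [omegaForm, Algebra.smul_def]; ring
    rw [e]; exact this
  have i8 : (p : Wp p 𝔽) • tauL p 𝔽 σ (dualL p 𝔽 D) ≤ tauL p 𝔽 σ D := by
    intro x hx
    obtain ⟨y, hy, rfl⟩ := (Submodule.mem_smul_pointwise_iff_exists _ _ _).1 hx
    rw [h.mem_tauL] at hy ⊢
    have e : tauFun p 𝔽 σ.symm ((p : Wp p 𝔽) • y) = (p : Wp p 𝔽) • tauFun p 𝔽 σ.symm y := by
      funext i; simp [tauFun, Algebra.smul_def]
    rw [e]
    exact i1 (psmul_mem.2 hy)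
  set M := D ⊔ tauL p 𝔽 σ D with hM
  set M' := D ⊓ tauL p 𝔽 σ D with hM'
  have c1 : D ⋖ M := lenQ_one_of (lt_of_le_of_ne le_sup_left (fun e => n1 (sup_eq_left.1 e.symm))) l5
  have iM : M ≤ dualL p 𝔽 D := sup_le i2 i4
  have ltM : M < dualL p 𝔽 D := two_lt l2 c1 iM
  have c2 : M ⋖ dualL p 𝔽 D := (two_split l2 c1.lt ltM).2
  have c3 : tauL p 𝔽 σ D ⋖ M := (two_split l4
    (lt_of_le_of_ne le_sup_right (fun e => n2 (sup_eq_right.1 e.symm))) ltM).1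
  have c4 : M' ⋖ D := inf_covBy_of_covBy_sup_right c3
  have c5 : M' ⋖ tauL p 𝔽 σ D := inf_covBy_of_covBy_sup_left c1
  have iM' : (p : Wp p 𝔽) • dualL p 𝔽 D ≤ M' := le_inf i1 i3
  have c6 : (p : Wp p 𝔽) • dualL p 𝔽 D ⋖ M' := (two_split l1 (two_lt' l1 iM' c4) c4.lt).1
  -- lattices
  have latM : IsLattice p 𝔽 M := by
    refine ⟨?_, ?_⟩
    · have : ((p : Wp p 𝔽) • M).FG := by
        have : IsNoetherian (Wp p 𝔽) D := isNoetherian_of_fg_of_noetherian D hlat.1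
        exact Submodule.FG.of_le hlat.1 ((psmul_le.2 iM).trans i1)
      exact Submodule.fg_of_fg_map_injective
        (DistribSMul.toLinearMap (Wp p 𝔽) (N0 p 𝔽) (p : Wp p 𝔽)) psmul_inj this
    · rw [eq_top_iff, ← hlat.2]
      exact Submodule.span_mono c1.le
  have latM' : IsLattice p 𝔽 M' := by
    refine ⟨Submodule.FG.of_le hlat.1 c4.le, ?_⟩
    rw [eq_top_iff, ← hlat.2, Submodule.span_le]
    intro x hx
    have hx' : (p : Wp p 𝔽) • x ∈ M' := iM' (psmul_mem.2 (i2 hx))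
    have hx2 : (p : Kp p 𝔽)⁻¹ • ((p : Wp p 𝔽) • x) ∈
        Submodule.span (Kp p 𝔽) (M' : Set (N0 p 𝔽)) :=
      Submodule.smul_mem _ _ (Submodule.subset_span hx')
    have e : (p : Kp p 𝔽)⁻¹ • ((p : Wp p 𝔽) • x) = x := by
      funext i
      simp [Algebra.smul_def, pK_ne']
    rwa [e] at hx2
  -- self-duality
  have sM : M = dualL p 𝔽 M := by
    have a1 : M ≤ dualL p 𝔽 M := by
      apply sup_le
      · exact le_dual_comm iM
      · exact le_dual_comm (by rw [hdual]; exact sup_le i5 i6)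
    have a2 : dualL p 𝔽 M ≤ dualL p 𝔽 D := dual_anti c1.le
    rcases c2.eq_or_eq a1 a2 with e | e
    · exact e.symm
    · exfalso
      have := congrArg (dualL p 𝔽) e
      rw [dd, dual_dual p 𝔽 M latM] at this
      exact c1.ne this.symm
  have ddM' := dual_dual p 𝔽 M' latM'
  have sM' : M' = (p : Wp p 𝔽) • dualL p 𝔽 M' := by
    have a1 : (p : Wp p 𝔽) • dualL p 𝔽 D ≤ (p : Wp p 𝔽) • dualL p 𝔽 M' :=
      psmul_le.2 (dual_anti c4.le)
    have a2 : (p : Wp p 𝔽) • dualL p 𝔽 M' ≤ M' := by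
      intro x hx
      obtain ⟨y, hy, rfl⟩ := (Submodule.mem_smul_pointwise_iff_exists _ _ _).1 hx
      have gen : ∀ E : Submodule (Wp p 𝔽) (N0 p 𝔽), (p : Wp p 𝔽) • dualL p 𝔽 E ≤ M' →
          (p : Wp p 𝔽) • y ∈ dualL p 𝔽 (dualL p 𝔽 E) := by
        intro E hE d hd
        have := hy ((p : Wp p 𝔽) • d) (hE (psmul_mem.2 hd))
        have e : omegaForm p 𝔽 ((p : Wp p 𝔽) • y) d = omegaForm p 𝔽 y ((p : Wp p 𝔽) • d) := by
          simp [omegaForm, Algebra.smul_def]; ring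
        rw [e]; exact this
      refine ⟨?_, ?_⟩
      · have := gen D iM'
        rwa [dd] at this
      · have := gen (tauL p 𝔽 σ D) (by rw [hdual]; exact le_inf i7 i8)
        rwa [hdual, h.dual, dd] at this
    rcases c6.eq_or_eq a1 a2 with e | e
    · exfalso
      have := congrArg (dualL p 𝔽) (psmul_cancel e)
      rw [dd, ddM'] at this
      exact c4.ne this
    · exact e.symm
  by_cases tM : tauL p 𝔽 σ M = M
  · left
    refine ⟨M, latM, tM, sM, ?_, c1⟩
    rw [← sM]
    exact psmul_covBy.2 c2
  by_cases tM' : tauL p 𝔽 σ M' = M'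
  · right
    refine ⟨M', latM', tM', sM', ?_, c4, ?_⟩
    · rw [← sM']; exact c6
    · rw [← psmul_covBy, ← sM']; exact c6
  exfalso
  have e1 : tauL p 𝔽 σ (dualL p 𝔽 D) = M ⊔ tauL p 𝔽 σ M := by
    have a1 : M ⊔ tauL p 𝔽 σ M ≤ tauL p 𝔽 σ (dualL p 𝔽 D) :=
      sup_le (sup_le i5 i6) (h.covBy c2).le
    rcases (h.covBy c2).eq_or_eq le_sup_right a1 with e | e
    · exfalso
      have a2 : M ≤ tauL p 𝔽 σ M := sup_eq_right.1 e
      rcases (h.covBy c1).eq_or_eq c3.le a2 with e' | e'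
      · exact c3.ne e'.symm
      · exact tM e'.symm
    · exact e.symm
  have e2 : tauL p 𝔽 σ D = M' ⊔ tauL p 𝔽 σ M' := by
    have c7 := h.covBy c4
    rcases c5.eq_or_eq le_sup_left (sup_le c5.le c7.le) with e | e
    · exfalso
      have a2 : tauL p 𝔽 σ M' ≤ M' := sup_eq_left.1 e
      rcases c7.eq_or_eq a2 c5.le with e' | e'
      · exact tM' e'.symm
      · exact c5.ne e'
    · exact e.symm
  have e3 : M' = (p : Wp p 𝔽) • dualL p 𝔽 D ⊔ (p : Wp p 𝔽) • tauL p 𝔽 σ (dualL p 𝔽 D) := by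
    rcases c6.eq_or_eq le_sup_left (sup_le iM' (le_inf i7 i8)) with e | e
    · exfalso
      have a2 := psmul_le.1 (sup_eq_left.1 e)
      have a3 := dual_anti a2
      rw [dd, h.dual, dd] at a3
      exact n2 a3
    · exact e.symm
  refine no_descent D hlat σ fun c hc hle => ?_
  have b1 : M ≤ Lam c := sup_le hle ((h.Lam_le hc).2 hle)
  have b2 : tauL p 𝔽 σ (dualL p 𝔽 D) ≤ Lam c := by
    rw [e1]; exact sup_le b1 ((h.Lam_le hc).2 b1)
  have b3 : dualL p 𝔽 D ≤ Lam c := (h.Lam_le hc).1 b2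
  have hc' : σ ((p : Kp p 𝔽) * c) = (p : Kp p 𝔽) * c := by rw [map_mul, map_natCast, hc]
  have b4 : M' ≤ Lam ((p : Kp p 𝔽) * c) := by
    rw [e3]
    exact sup_le ((psmul_le.2 b3).trans (psmul_Lam c)) ((psmul_le.2 b2).trans (psmul_Lam c))
  rw [← h.Lam_le hc', e2]
  exact sup_le b4 ((h.Lam_le hc').2 b4)

end Helpers

/-- For `D ∈ ℳ(𝔽)`: either (i) `τD = D` (and `pD^∨ ⊂² D ⊂² D^∨`);
or (ii) there is a `τ`-stable lattice `L` with `L = L^∨` and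
`pL^∨ ⊂¹ pD^∨ ⊂² D ⊂¹ L`; or (iii) there is a `τ`-stable lattice `L` with `L = pL^∨`
and `pD^∨ ⊂¹ pL^∨`, `L ⊂¹ D ⊂² D^∨ ⊂¹ L^∨`. -/
theorem vertex_lattice_trichotomy
    (p : ℕ) [Fact p.Prime] (hp : Odd p)
    (𝔽 : Type) [Field 𝔽] [IsAlgClosed 𝔽] [CharP 𝔽 p]
    (σ : Kp p 𝔽 ≃+* Kp p 𝔽) (hσ : IsWittFrobenius p 𝔽 σ)
    (D : Submodule (Wp p 𝔽) (N0 p 𝔽)) (hD : memM p 𝔽 σ D) :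
    (tauL p 𝔽 σ D = D ∧ SubD p 𝔽 2 ((p : Wp p 𝔽) • dualL p 𝔽 D) D ∧
      SubD p 𝔽 2 D (dualL p 𝔽 D)) ∨
    (∃ L : Submodule (Wp p 𝔽) (N0 p 𝔽), IsLattice p 𝔽 L ∧ tauL p 𝔽 σ L = L ∧
      L = dualL p 𝔽 L ∧
      SubD p 𝔽 1 ((p : Wp p 𝔽) • dualL p 𝔽 L) ((p : Wp p 𝔽) • dualL p 𝔽 D) ∧
      SubD p 𝔽 2 ((p : Wp p 𝔽) • dualL p 𝔽 D) D ∧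
      SubD p 𝔽 1 D L) ∨
    (∃ L : Submodule (Wp p 𝔽) (N0 p 𝔽), IsLattice p 𝔽 L ∧ tauL p 𝔽 σ L = L ∧
      L = (p : Wp p 𝔽) • dualL p 𝔽 L ∧
      SubD p 𝔽 1 ((p : Wp p 𝔽) • dualL p 𝔽 D) ((p : Wp p 𝔽) • dualL p 𝔽 L) ∧
      SubD p 𝔽 1 L D ∧ SubD p 𝔽 2 D (dualL p 𝔽 D) ∧
      SubD p 𝔽 1 (dualL p 𝔽 D) (dualL p 𝔽 L)) := by
  by_cases hne : tauL p 𝔽 σ D = D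
  · exact Or.inl ⟨hne, hD.2.1, hD.2.2.1⟩
  · right
    have h : FrobLike p 𝔽 σ := ⟨WittVector.frobeniusEquiv p 𝔽, hσ⟩
    rcases main_aux h D hD hne with ⟨L, a, b, c, d, e⟩ | ⟨L, a, b, c, d, e, f⟩
    · left
      exact ⟨L, a, b, c, (SubD_one p 𝔽 _ _).2 d, hD.2.1, (SubD_one p 𝔽 _ _).2 e⟩
    · right
      exact ⟨L, a, b, c, (SubD_one p 𝔽 _ _).2 d, (SubD_one p 𝔽 _ _).2 e, hD.2.2.1,
        (SubD_one p 𝔽 _ _).2 f⟩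

end
end

section
/- Let L and L′ be τ-stable lattices in N₀ and D ∈ ℳ(𝔽). (a) If L = L^∨, L′ = (L′)^∨, L ≠ L′, and D ⊆ L and D ⊆ L′, then D = L ∩ L′ and p(L ∩ L′)^∨ ⊂² L ∩ L′ ⊂² (L ∩ L′)^∨. (b) If L = pL^∨, L′ = p(L′)^∨, L ≠ L′, and L ⊆ D and L′ ⊆ D, then D = L + L′ and p(L + L′)^∨ ⊂² L + L′ ⊂² (L + L′)^∨. -/
open Pointwise

noncomputable section

variable (p : ℕ) [Fact p.Prime] (𝔽 : Type) [Field 𝔽] [IsAlgClosed 𝔽] [CharP 𝔽 p]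

variable (σ : Kp p 𝔽 ≃+* Kp p 𝔽)

theorem relStrict_aux {R M : Type*} [CommRing R] [AddCommGroup M] [Module R M]
    (A E X Y : Submodule R M) (hA : A ≤ X) (hXY : X < Y) (hE : Y ≤ E) :
    (X.comap E.subtype).map (A.comap E.subtype).mkQ
      < (Y.comap E.subtype).map (A.comap E.subtype).mkQ := by
  refine lt_of_le_not_ge (Submodule.map_mono (Submodule.comap_mono hXY.le)) ?_
  intro h
  apply hXY.not_ge
  intro y hy
  have h1 := h (Submodule.mem_map_of_mem
    (show (⟨y, hE hy⟩ : E) ∈ Y.comap E.subtype from hy))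
  obtain ⟨x, hx, hxy⟩ := h1
  have h2 : x - ⟨y, hE hy⟩ ∈ A.comap E.subtype := by
    rw [← Submodule.Quotient.eq]; exact hxy
  have h3 : (x : M) - y ∈ X := hA h2
  have h4 : (x : M) ∈ X := hx
  simpa using X.sub_mem h4 h3

theorem chain_aux {α : Type*} [Preorder α] {a b c d : α} (h1 : a < b) (h2 : b < c)
    (h3 : c < d) : ((3 : ℕ) : WithBot ℕ∞) ≤ Order.krullDim α := by
  refine Order.le_krullDim_iff.2 ⟨⟨3, ![a, b, c, d], ?_⟩, rfl⟩
  intro i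
  fin_cases i
  · exact h1
  · exact h2
  · exact h3

theorem no_long_chain (A B C D E : Submodule (Wp p 𝔽) (N0 p 𝔽)) (h : SubD p 𝔽 2 A E)
    (hA : A ≤ B) (h1 : B < C) (h2 : C < D) (h3 : D < E) : False := by
  obtain ⟨-, h⟩ := h
  unfold relLength at h
  have e1 := relStrict_aux A E B C hA h1 (h2.trans h3).le
  have e2 := relStrict_aux A E C D (hA.trans h1.le) h2 h3.le
  have e3 := relStrict_aux A E D E (hA.trans (h1.trans h2).le) h3 le_rfl
  have := chain_aux e1 e2 e3
  rw [h] at this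
  norm_cast at this

theorem no_long_chain' (A B C D E : Submodule (Wp p 𝔽) (N0 p 𝔽)) (h : SubD p 𝔽 2 A E)
    (hA : A < B) (h1 : B < C) (h2 : C < D) (h3 : D ≤ E) : False := by
  rcases h3.lt_or_eq with h3 | rfl
  · exact no_long_chain p 𝔽 A B C D E h hA.le h1 h2 h3
  · exact no_long_chain p 𝔽 A A B C D h le_rfl hA h1 h2

theorem dualL_anti {A B : Submodule (Wp p 𝔽) (N0 p 𝔽)} (h : A ≤ B) :
    dualL p 𝔽 B ≤ dualL p 𝔽 A := fun _ hx d hd => hx d (h hd)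

theorem pdualL_anti {A B : Submodule (Wp p 𝔽) (N0 p 𝔽)} (h : A ≤ B) :
    (p : Wp p 𝔽) • dualL p 𝔽 B ≤ (p : Wp p 𝔽) • dualL p 𝔽 A :=
  Submodule.map_mono (dualL_anti p 𝔽 h)

/-- Let `D ∈ ℳ(𝔽)`.
(a) If `L, L′` are distinct `τ`-stable lattices with `L = L^∨`, `L′ = (L′)^∨` and
`D ⊆ L`, `D ⊆ L′`, then `D = L ∩ L′` and `p(L ∩ L′)^∨ ⊂² L ∩ L′ ⊂² (L ∩ L′)^∨`.
(b) If `L, L′` are distinct `τ`-stable lattices with `L = pL^∨`, `L′ = p(L′)^∨` and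
`L ⊆ D`, `L′ ⊆ D`, then `D = L + L′` and `p(L + L′)^∨ ⊂² L + L′ ⊂² (L + L′)^∨`. -/
theorem intersection_of_lattice_strata
    (p : ℕ) [Fact p.Prime] (hp : Odd p)
    (𝔽 : Type) [Field 𝔽] [IsAlgClosed 𝔽] [CharP 𝔽 p]
    (σ : Kp p 𝔽 ≃+* Kp p 𝔽) (hσ : IsWittFrobenius p 𝔽 σ)
    (D : Submodule (Wp p 𝔽) (N0 p 𝔽)) (hD : memM p 𝔽 σ D) :
    (∀ L L' : Submodule (Wp p 𝔽) (N0 p 𝔽),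
      IsLattice p 𝔽 L → tauL p 𝔽 σ L = L → IsLattice p 𝔽 L' → tauL p 𝔽 σ L' = L' →
      L = dualL p 𝔽 L → L' = dualL p 𝔽 L' → L ≠ L' → D ≤ L → D ≤ L' →
      D = L ⊓ L' ∧
      SubD p 𝔽 2 ((p : Wp p 𝔽) • dualL p 𝔽 (L ⊓ L')) (L ⊓ L') ∧
      SubD p 𝔽 2 (L ⊓ L') (dualL p 𝔽 (L ⊓ L'))) ∧
    (∀ L L' : Submodule (Wp p 𝔽) (N0 p 𝔽),
      IsLattice p 𝔽 L → tauL p 𝔽 σ L = L → IsLattice p 𝔽 L' → tauL p 𝔽 σ L' = L' →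
      L = (p : Wp p 𝔽) • dualL p 𝔽 L → L' = (p : Wp p 𝔽) • dualL p 𝔽 L' → L ≠ L' →
      L ≤ D → L' ≤ D →
      D = L ⊔ L' ∧
      SubD p 𝔽 2 ((p : Wp p 𝔽) • dualL p 𝔽 (L ⊔ L')) (L ⊔ L') ∧
      SubD p 𝔽 2 (L ⊔ L') (dualL p 𝔽 (L ⊔ L'))) := by
  obtain ⟨-, hD1, hD2, -⟩ := hD
  constructor
  · intro L L' _ _ _ _ hL hL' hne hDL hDL'
    have n1 : ¬ L ≤ L' := fun h => hne (le_antisymm h (by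
      rw [hL, hL']; exact dualL_anti p 𝔽 h))
    have n2 : ¬ L' ≤ L := fun h => hne (le_antisymm (by
      rw [hL, hL']; exact dualL_anti p 𝔽 h) h)
    have hb : L ⊔ L' ≤ dualL p 𝔽 D := by
      refine sup_le ?_ ?_
      · rw [hL]; exact dualL_anti p 𝔽 hDL
      · rw [hL']; exact dualL_anti p 𝔽 hDL'
    have key : D = L ⊓ L' := by
      by_contra hc
      exact no_long_chain' p 𝔽 D (L ⊓ L') L (L ⊔ L') _ hD2
        (lt_of_le_of_ne (le_inf hDL hDL') hc) (inf_lt_left.2 n1) (left_lt_sup.2 n2) hb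
    rw [← key]
    exact ⟨rfl, hD1, hD2⟩
  · intro L L' _ _ _ _ hL hL' hne hDL hDL'
    have n1 : ¬ L ≤ L' := fun h => hne (le_antisymm h (by
      rw [hL, hL']; exact pdualL_anti p 𝔽 h))
    have n2 : ¬ L' ≤ L := fun h => hne (le_antisymm (by
      rw [hL, hL']; exact pdualL_anti p 𝔽 h) h)
    have hb : (p : Wp p 𝔽) • dualL p 𝔽 D ≤ L ⊓ L' := by
      refine le_inf ?_ ?_
      · rw [hL]; exact pdualL_anti p 𝔽 hDL
      · rw [hL']; exact pdualL_anti p 𝔽 hDL'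
    have key : D = L ⊔ L' := by
      by_contra hc
      exact no_long_chain p 𝔽 _ (L ⊓ L') L (L ⊔ L') D hD1 hb
        (inf_lt_left.2 n1) (left_lt_sup.2 n2) (lt_of_le_of_ne (sup_le hDL hDL') (Ne.symm hc))
    rw [← key]
    exact ⟨rfl, hD1, hD2⟩

end
end

section
/- Let U ⊆ V be a subspace with dim U = 3, U^⊥ ⊆ U ∩ σU, and σU ≠ U. Then U ∩ σU is 2-dimensional, U ∩ σU = U^⊥ + σ(U^⊥), and (U ∩ σU)^⊥ = U ∩ σU (so U ∩ σU is a totally isotropic plane). -/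
noncomputable section

variable (p : ℕ) [Fact p.Prime]
variable (𝔽 : Type) [Field 𝔽] [IsAlgClosed 𝔽] [CharP 𝔽 p]

/-- The symplectic form on `V = 𝔽⁴` (base changed from the standard form over `𝔽_p`). -/
def omegaF (x y : Fin 4 → 𝔽) : 𝔽 :=
  x 0 * y 3 - x 3 * y 0 + x 1 * y 2 - x 2 * y 1

/-- The `p`-semilinear Frobenius `σ` on `V = V₀ ⊗ 𝔽 = 𝔽⁴` (acting as `c ↦ c^p`
on the coordinates with respect to the fixed `𝔽_p`-rational basis). -/
def frobV (x : Fin 4 → 𝔽) : Fin 4 → 𝔽 := fun i => (x i) ^ p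

/-- The orthogonal complement `U^⊥` with respect to `ω`. -/
def perp (U : Submodule 𝔽 (Fin 4 → 𝔽)) : Submodule 𝔽 (Fin 4 → 𝔽) where
  carrier := {x | ∀ u ∈ U, omegaF 𝔽 x u = 0}
  zero_mem' := by
    intro u hu
    simp [omegaF]
  add_mem' := by
    intro x y hx hy u hu
    have h : omegaF 𝔽 (x + y) u = omegaF 𝔽 x u + omegaF 𝔽 y u := by
      simp [omegaF]; ring
    rw [h, hx u hu, hy u hu, add_zero]
  smul_mem' := by
    intro c x hx u hu
    have h : omegaF 𝔽 (c • x) u = c * omegaF 𝔽 x u := by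
      simp [omegaF]; ring
    rw [h, hx u hu, mul_zero]

/-- The image `σU` of a subspace `U` under the Frobenius `σ` (an `𝔽`-subspace since
`𝔽` is perfect). -/
def sigL (U : Submodule 𝔽 (Fin 4 → 𝔽)) : Submodule 𝔽 (Fin 4 → 𝔽) :=
  Submodule.span 𝔽 (frobV p 𝔽 '' U)

/-- `ω` as a bilinear form. -/
def omegaB : LinearMap.BilinForm 𝔽 (Fin 4 → 𝔽) :=
  LinearMap.mk₂ 𝔽 (omegaF 𝔽)
    (by intro x y z; simp [omegaF]; ring)
    (by intro c x y; simp [omegaF]; ring)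
    (by intro x y z; simp [omegaF]; ring)
    (by intro c x y; simp [omegaF]; ring)

theorem omegaF_swap (x y : Fin 4 → 𝔽) : omegaF 𝔽 x y = - omegaF 𝔽 y x := by
  simp only [omegaF]; ring

theorem omegaB_refl : (omegaB 𝔽).IsRefl := by
  intro x y h
  change omegaF 𝔽 y x = 0
  have h' : omegaF 𝔽 x y = 0 := h
  rw [omegaF_swap, h', neg_zero]

theorem omega_nondeg (x : Fin 4 → 𝔽) (h : ∀ y, omegaF 𝔽 x y = 0) : x = 0 := by
  have h0 := h (Pi.single 0 1)
  have h1 := h (Pi.single 1 1)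
  have h2 := h (Pi.single 2 1)
  have h3 := h (Pi.single 3 1)
  simp [omegaF, Pi.single_apply] at h0 h1 h2 h3
  ext i
  fin_cases i <;> simp [*]

theorem omegaB_nondeg : (omegaB 𝔽).Nondegenerate := by
  refine (omegaB_refl 𝔽).nondegenerate_iff_separatingLeft.2 ?_
  intro x h
  exact omega_nondeg 𝔽 x h

theorem perp_eq (U : Submodule 𝔽 (Fin 4 → 𝔽)) : perp 𝔽 U = (omegaB 𝔽).orthogonal U := by
  ext x
  constructor
  · intro h u hu
    exact omegaB_refl 𝔽 _ _ (h u hu)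
  · intro h u hu
    exact omegaB_refl 𝔽 _ _ (h u hu)

theorem finrank_perp (U : Submodule 𝔽 (Fin 4 → 𝔽)) :
    Module.finrank 𝔽 (perp 𝔽 U) = 4 - Module.finrank 𝔽 U := by
  rw [perp_eq, LinearMap.BilinForm.finrank_orthogonal (omegaB_nondeg 𝔽)]
  simp

theorem perp_perp (U : Submodule 𝔽 (Fin 4 → 𝔽)) : perp 𝔽 (perp 𝔽 U) = U := by
  rw [perp_eq, perp_eq,
    LinearMap.BilinForm.orthogonal_orthogonal (omegaB_nondeg 𝔽) (omegaB_refl 𝔽)]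

theorem perp_anti {U W : Submodule 𝔽 (Fin 4 → 𝔽)} (h : U ≤ W) : perp 𝔽 W ≤ perp 𝔽 U :=
  fun _ hx u hu => hx u (h hu)

theorem frob_bij : Function.Bijective (fun c : 𝔽 => c ^ p) := by
  haveI : ExpChar 𝔽 p := ExpChar.prime (Fact.out)
  exact bijective_frobenius 𝔽 p

theorem frobV_add (x y : Fin 4 → 𝔽) : frobV p 𝔽 (x + y) = frobV p 𝔽 x + frobV p 𝔽 y := by
  ext i
  simp [frobV, add_pow_char]

theorem frobV_smul (c : 𝔽) (x : Fin 4 → 𝔽) :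
    frobV p 𝔽 (c • x) = c ^ p • frobV p 𝔽 x := by
  ext i
  simp [frobV, mul_pow]

theorem frobV_inj : Function.Injective (frobV p 𝔽) := by
  intro x y h
  ext i
  exact (frob_bij p 𝔽).1 (congrFun h i)

theorem mem_sigL (U : Submodule 𝔽 (Fin 4 → 𝔽)) (x : Fin 4 → 𝔽) :
    x ∈ sigL p 𝔽 U ↔ ∃ u ∈ U, frobV p 𝔽 u = x := by
  constructor
  · intro h
    induction h using Submodule.span_induction with
    | mem x h => exact h
    | zero =>
      refine ⟨0, U.zero_mem, ?_⟩
      ext i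
      simp [frobV, (Fact.out : p.Prime).ne_zero]
    | add x y _ _ hx hy =>
      obtain ⟨u, hu, rfl⟩ := hx
      obtain ⟨v, hv, rfl⟩ := hy
      exact ⟨u + v, U.add_mem hu hv, frobV_add p 𝔽 u v⟩
    | smul c x _ hx =>
      obtain ⟨u, hu, rfl⟩ := hx
      obtain ⟨d, rfl⟩ := (frob_bij p 𝔽).2 c
      exact ⟨d • u, U.smul_mem d hu, frobV_smul p 𝔽 d u⟩
  · intro h
    exact Submodule.subset_span h

theorem finrank_sigL (U : Submodule 𝔽 (Fin 4 → 𝔽)) :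
    Module.finrank 𝔽 (sigL p 𝔽 U) = Module.finrank 𝔽 U := by
  let f : U →+ sigL p 𝔽 U :=
    AddMonoidHom.mk' (fun u => ⟨frobV p 𝔽 u, (mem_sigL p 𝔽 U _).2 ⟨u, u.2, rfl⟩⟩)
      (fun u v => Subtype.ext (frobV_add p 𝔽 u v))
  have hf : Function.Bijective f := by
    constructor
    · intro u v h
      exact Subtype.ext (frobV_inj p 𝔽 (congrArg Subtype.val h))
    · rintro ⟨x, hx⟩
      obtain ⟨u, hu, rfl⟩ := (mem_sigL p 𝔽 U x).1 hx
      exact ⟨⟨u, hu⟩, rfl⟩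
  have := rank_eq_of_equiv_equiv (fun c : 𝔽 => c ^ p) (AddEquiv.ofBijective f hf)
    (frob_bij p 𝔽) (fun c u => Subtype.ext (frobV_smul p 𝔽 c u))
  simp only [Module.finrank, this]

theorem omegaF_frob (x y : Fin 4 → 𝔽) :
    omegaF 𝔽 (frobV p 𝔽 x) (frobV p 𝔽 y) = omegaF 𝔽 x y ^ p := by
  simp [omegaF, frobV, sub_pow_char, add_pow_char, mul_pow]

theorem perp_sigL (U : Submodule 𝔽 (Fin 4 → 𝔽)) :
    sigL p 𝔽 (perp 𝔽 U) = perp 𝔽 (sigL p 𝔽 U) := by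
  apply Submodule.eq_of_le_of_finrank_eq
  · intro x hx w hw
    obtain ⟨u, hu, rfl⟩ := (mem_sigL p 𝔽 _ x).1 hx
    obtain ⟨v, hv, rfl⟩ := (mem_sigL p 𝔽 _ w).1 hw
    rw [omegaF_frob, hu v hv, zero_pow (Fact.out : p.Prime).ne_zero]
  · rw [finrank_sigL, finrank_perp, finrank_perp, finrank_sigL]

theorem perp_inf (U W : Submodule 𝔽 (Fin 4 → 𝔽)) :
    perp 𝔽 (U ⊓ W) = perp 𝔽 U ⊔ perp 𝔽 W := by
  apply le_antisymm
  · rw [← perp_perp 𝔽 (perp 𝔽 U ⊔ perp 𝔽 W)]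
    apply perp_anti
    apply le_inf
    · conv_rhs => rw [← perp_perp 𝔽 U]
      exact perp_anti 𝔽 le_sup_left
    · conv_rhs => rw [← perp_perp 𝔽 W]
      exact perp_anti 𝔽 le_sup_right
  · exact sup_le (perp_anti 𝔽 inf_le_left) (perp_anti 𝔽 inf_le_right)

/-- Let `U ⊆ V` be a subspace with `dim U = 3`,
`U^⊥ ⊆ U ∩ σU` and `σU ≠ U`. Then `U ∩ σU` is 2-dimensional,
`U ∩ σU = U^⊥ + σ(U^⊥)`, and `(U ∩ σU)^⊥ = U ∩ σU`. -/
theorem intersection_with_frobenius_translate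
    (p : ℕ) [Fact p.Prime]
    (𝔽 : Type) [Field 𝔽] [IsAlgClosed 𝔽] [CharP 𝔽 p]
    (U : Submodule 𝔽 (Fin 4 → 𝔽))
    (hdim : Module.finrank 𝔽 U = 3)
    (hperp : perp 𝔽 U ≤ U ⊓ sigL p 𝔽 U)
    (hne : sigL p 𝔽 U ≠ U) :
    Module.finrank 𝔽 ↥(U ⊓ sigL p 𝔽 U) = 2 ∧
    U ⊓ sigL p 𝔽 U = perp 𝔽 U ⊔ sigL p 𝔽 (perp 𝔽 U) ∧
    perp 𝔽 (U ⊓ sigL p 𝔽 U) = U ⊓ sigL p 𝔽 U := by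
  have hS : Module.finrank 𝔽 (sigL p 𝔽 U) = 3 := by rw [finrank_sigL, hdim]
  have h2 : Module.finrank 𝔽 ↥(U ⊓ sigL p 𝔽 U) = 2 := by
    have hsum := Submodule.finrank_sup_add_finrank_inf_eq U (sigL p 𝔽 U)
    have hle : Module.finrank 𝔽 ↥(U ⊔ sigL p 𝔽 U) ≤ 4 := by
      simpa using Submodule.finrank_le (U ⊔ sigL p 𝔽 U)
    have hlt : Module.finrank 𝔽 ↥(U ⊓ sigL p 𝔽 U) < 3 := by
      rw [← hdim]
      apply Submodule.finrank_lt_finrank_of_lt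
      refine lt_of_le_of_ne inf_le_left fun h => hne ?_
      exact (Submodule.eq_of_le_of_finrank_eq (inf_eq_left.1 h) (by rw [hdim, hS])).symm
    omega
  have hle : perp 𝔽 (U ⊓ sigL p 𝔽 U) ≤ U ⊓ sigL p 𝔽 U := by
    rw [perp_inf]
    refine sup_le hperp (le_inf ?_ ?_)
    · conv_rhs => rw [← perp_perp 𝔽 U]
      exact perp_anti 𝔽 (hperp.trans inf_le_right)
    · rw [← perp_sigL]
      exact Submodule.span_mono (Set.image_mono (hperp.trans inf_le_left))
  have heq : perp 𝔽 (U ⊓ sigL p 𝔽 U) = U ⊓ sigL p 𝔽 U :=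
    Submodule.eq_of_le_of_finrank_eq hle (by rw [finrank_perp, h2])
  refine ⟨h2, ?_, heq⟩
  rw [perp_sigL, ← perp_inf, heq]

end
end
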